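/- Let N ≥ 1 and Λ > 1. Let (u, v) be a classical solution of the system (P_Λ) with u ≥ 0 and v ≥ 0 on ℝ^N, satisfying condition (h∞). Then there exists δ > 0 such that for every unit vector ν ∈ ℝ^N with |ν − e_N| < δ, the directional derivatives satisfy ∂_ν u > 0 and ∂_ν v < 0 at every point of ℝ^N (i.e. u is strictly increasing and v strictly decreasing with respect to all unit vectors in an open neighborhood of e_N in the unit sphere). -/

import Mathlib

/-!
The proof is the sliding method. Order the pair `(u, v)` against its translate by `a`: `a` is
*ordered* if `u ≤ u (· + a)` and `v (· + a) ≤ v`. The differences `w = u (· + a) - u` and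
`z = v - v (· + a)` solve a linear system which, where `(u, v)` is close to `(1, 0)` or `(0, 1)`,
has uniformly positive diagonal coefficients and a small cooperative coupling because `Λ > 1`;
hence it satisfies a maximum principle there, and `a` is ordered as soon as `w, z ≥ 0` on a strip.

* For a long translation the strip condition holds because `u` and `1 - v` are bounded below by a
  positive constant on upper half spaces.
* The set of ordered directions is closed, and open within the half space `ℓ a > 0`: once
  `w, z ≥ 0`, they satisfy `Δ w ≤ C w` and `Δ z ≤ C z`, and a comparison with a Gaussian, with
  constants independent of the solution, makes both bounded below by a positive constant on strips.
  Hence every direction of the half space is ordered.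
* Applied to `u (· + t a) - u` as `t → 0⁺`, the same comparison carries a lower bound proportional
  to `t` from a point where `∂ₐ u > 0` to every other point, so `∂ₐ u > 0` everywhere.

Uniform continuity and the a priori bound `u ≤ 1` also come from barriers: the latter from the
Keller–Osserman supersolution `A / (1 - ε ‖x - a‖²)`, the former by comparing `u` with its
reflection in a hyperplane. The statements about `v` follow from those about `u` by the symmetry
`(ℓ, u, v) ↦ (-ℓ, v, u)`.
-/

open scoped RealInnerProductSpace
open Filter

noncomputable section

/-- The Laplacian of `f : ℝ^N → ℝ`, as the sum of the pure second partial
derivatives in the coordinate directions. -/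
def lap (N : ℕ) (f : EuclideanSpace ℝ (Fin N) → ℝ) (x : EuclideanSpace ℝ (Fin N)) : ℝ :=
  ∑ i : Fin N,
    fderiv ℝ (fun y => fderiv ℝ f y (EuclideanSpace.single i 1)) x (EuclideanSpace.single i 1)

/-- `(u, v)` is a classical solution of the system `(P_Λ)` on `ℝ^N`:
`u, v` are `C²` and `-Δu = u - u³ - Λ u v²`, `-Δv = v - v³ - Λ u² v` pointwise. -/
def IsSolution (N : ℕ) (Λ : ℝ) (u v : EuclideanSpace ℝ (Fin N) → ℝ) : Prop :=
  ContDiff ℝ 2 u ∧ ContDiff ℝ 2 v ∧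
  (∀ x, -lap N u x = u x - (u x) ^ 3 - Λ * u x * (v x) ^ 2) ∧
  (∀ x, -lap N v x = v x - (v x) ^ 3 - Λ * (u x) ^ 2 * v x)

/-- Condition `(h∞)`: `u → 1`, `v → 0` as `x_N → +∞` and `u → 0`, `v → 1` as
`x_N → -∞`, uniformly with respect to `x' ∈ ℝ^{N-1}` (the dimension is `N + 1`). -/
def Hinf (N : ℕ) (u v : EuclideanSpace ℝ (Fin (N + 1)) → ℝ) : Prop :=
  (∀ ε : ℝ, 0 < ε → ∃ M : ℝ, ∀ x : EuclideanSpace ℝ (Fin (N + 1)),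
    M ≤ x (Fin.last N) → |u x - 1| < ε ∧ |v x| < ε) ∧
  (∀ ε : ℝ, 0 < ε → ∃ M : ℝ, ∀ x : EuclideanSpace ℝ (Fin (N + 1)),
    x (Fin.last N) ≤ M → |u x| < ε ∧ |v x - 1| < ε)

open Laplacian InnerProductSpace Module Topology Set Metric

variable {E : Type*} [NormedAddCommGroup E] [InnerProductSpace ℝ E]

theorem iteratedFDeriv_two_eq_deriv_deriv {f : E → ℝ} {x : E} (hf : ContDiffAt ℝ 2 f x) (v : E) :
    iteratedFDeriv ℝ 2 f x ![v, v] = deriv (deriv fun t : ℝ => f (x + t • v)) 0 := by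
  have hline (t : ℝ) : HasDerivAt (fun t : ℝ => x + t • v) v t := by
    simpa using ((hasDerivAt_id t).smul_const v).const_add x
  have hdiff : ∀ᶠ t : ℝ in 𝓝 0, DifferentiableAt ℝ f (x + t • v) := by
    refine (show Tendsto (fun t : ℝ => x + t • v) (𝓝 0) (𝓝 x) by
      simpa using (hline 0).continuousAt.tendsto).eventually ?_
    filter_upwards [hf.eventually (by simp)] with y hy using hy.differentiableAt (by simp)
  have hfirst : deriv (fun t : ℝ => f (x + t • v)) =ᶠ[𝓝 0] fun t => fderiv ℝ f (x + t • v) v := by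
    filter_upwards [hdiff] with t ht
    exact (ht.hasFDerivAt.comp_hasDerivAt t (hline t)).deriv
  have hsecond : HasFDerivAt (fun y => fderiv ℝ f y v)
      ((fderiv ℝ (fderiv ℝ f) x).flip v) (x + (0 : ℝ) • v) := by
    have := (hf.fderiv_right (m := 1) (by norm_num)).differentiableAt (by simp)
    simpa using this.hasFDerivAt.clm_apply (hasFDerivAt_const v x)
  have hderiv : HasDerivAt (fun t : ℝ => fderiv ℝ f (x + t • v) v)
      (fderiv ℝ (fderiv ℝ f) x v v) 0 :=
    hsecond.comp_hasDerivAt (f := fun t : ℝ => x + t • v) 0 (hline 0)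
  rw [hfirst.deriv_eq, hderiv.deriv, iteratedFDeriv_two_apply]
  rfl

variable [FiniteDimensional ℝ E]

theorem laplacian_eq_sum_deriv_deriv {ι : Type*} [Fintype ι] (b : OrthonormalBasis ι ℝ E)
    {f : E → ℝ} {x : E} (hf : ContDiffAt ℝ 2 f x) :
    Δ f x = ∑ i, deriv (deriv fun t : ℝ => f (x + t • b i)) 0 := by
  simp only [laplacian_eq_iteratedFDeriv_orthonormalBasis f b,
    iteratedFDeriv_two_eq_deriv_deriv hf]

theorem deriv_deriv_nonneg_of_isLocalMin {f : ℝ → ℝ} {x : ℝ} (hf : ContinuousAt f x)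
    (hmin : IsLocalMin f x) : 0 ≤ deriv (deriv f) x := by
  by_contra! hneg
  have hmax := isLocalMax_of_deriv_deriv_neg hneg hmin.deriv_eq_zero hf
  have hconst : f =ᶠ[𝓝 x] fun _ => f x := by
    filter_upwards [hmin, hmax] with y hy hy' using le_antisymm hy' hy
  simp [hconst.deriv.deriv_eq] at hneg

theorem laplacian_nonneg_of_isLocalMin {f : E → ℝ} {x : E} (hf : ContDiffAt ℝ 2 f x)
    (hmin : IsLocalMin f x) : 0 ≤ Δ f x := by
  rw [laplacian_eq_sum_deriv_deriv (stdOrthonormalBasis ℝ E) hf]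
  refine Finset.sum_nonneg fun i _ => ?_
  have hline : Continuous fun t : ℝ => x + t • stdOrthonormalBasis ℝ E i := by fun_prop
  have hcont : ContinuousAt (fun t : ℝ => f (x + t • stdOrthonormalBasis ℝ E i)) 0 :=
    ContinuousAt.comp (by simpa using hf.continuousAt) hline.continuousAt
  refine deriv_deriv_nonneg_of_isLocalMin hcont ?_
  simpa [IsLocalMin, IsMinFilter] using (hline.tendsto' 0 x (by simp)).eventually hmin

theorem laplacian_add_const {f : E → ℝ} {x : E} (hf : ContDiffAt ℝ 2 f x) (c : ℝ) :
    Δ (fun y => f y + c) x = Δ f x := by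
  have h := hf.laplacian_add (contDiffAt_const (c := c))
  simpa [Pi.add_def] using h

theorem laplacian_comp_add_right (f : E → ℝ) (a x : E) :
    Δ (fun y => f (y + a)) x = Δ f (x + a) := by
  simp only [laplacian_eq_iteratedFDeriv_stdOrthonormalBasis, iteratedFDeriv_comp_add_right]

theorem laplacian_comp_add_left (f : E → ℝ) (a x : E) :
    Δ (fun y => f (a + y)) x = Δ f (a + x) := by
  simp only [laplacian_eq_iteratedFDeriv_stdOrthonormalBasis, iteratedFDeriv_comp_add_left]

theorem laplacian_comp_linearIsometryEquiv {f : E → ℝ} (hf : ContDiff ℝ 2 f) (L : E ≃ₗᵢ[ℝ] E)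
    (x : E) : Δ (fun y => f (L y)) x = Δ f (L x) := by
  have h (v : E) : iteratedFDeriv ℝ 2 (fun y => f (L y)) x ![v, v] =
      iteratedFDeriv ℝ 2 f (L x) ![L v, L v] := by
    have := (L : E →L[ℝ] E).iteratedFDeriv_comp_right hf x (i := 2) le_rfl
    change iteratedFDeriv ℝ 2 (f ∘ (L : E →L[ℝ] E)) x ![v, v] = _
    rw [this, ContinuousMultilinearMap.compContinuousLinearMap_apply]
    exact congrArg _ (List.ofFn_injective rfl)
  rw [laplacian_eq_iteratedFDeriv_orthonormalBasis f ((stdOrthonormalBasis ℝ E).map L),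
    laplacian_eq_iteratedFDeriv_stdOrthonormalBasis]
  simp [h]

theorem deriv_deriv_comp {g F : ℝ → ℝ} {t : ℝ} (hF : ContDiffAt ℝ 2 F (g t))
    (hg : ContDiffAt ℝ 2 g t) :
    deriv (deriv fun s => F (g s)) t =
      deriv (deriv F) (g t) * deriv g t ^ 2 + deriv F (g t) * deriv (deriv g) t := by
  have hfirst : deriv (fun s => F (g s)) =ᶠ[𝓝 t] fun s => deriv F (g s) * deriv g s := by
    filter_upwards [hg.continuousAt.eventually (hF.eventually (by simp)),
      hg.eventually (by simp)] with s hFs hgs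
    exact deriv_comp s (hFs.differentiableAt (by simp)) (hgs.differentiableAt (by simp))
  have hF' : HasDerivAt (deriv F) (deriv (deriv F) (g t)) (g t) :=
    (((hF.fderiv_right (m := 1) (by norm_num)).differentiableAt (by simp)).clm_apply
      (differentiableAt_const (1 : ℝ))).hasDerivAt
  have hg' : HasDerivAt (deriv g) (deriv (deriv g) t) t :=
    (((hg.fderiv_right (m := 1) (by norm_num)).differentiableAt (by simp)).clm_apply
      (differentiableAt_const (1 : ℝ))).hasDerivAt
  have hgt := (hg.differentiableAt (by simp)).hasDerivAt
  have hcomp : HasDerivAt (fun s => deriv F (g s)) (deriv (deriv F) (g t) * deriv g t) t :=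
    hF'.comp t hgt
  rw [hfirst.deriv_eq, (hcomp.fun_mul hg').deriv]
  ring

theorem laplacian_comp {g : E → ℝ} {F : ℝ → ℝ} {x : E} (hF : ContDiffAt ℝ 2 F (g x))
    (hg : ContDiffAt ℝ 2 g x) :
    Δ (fun y => F (g y)) x =
      deriv (deriv F) (g x) * ‖fderiv ℝ g x‖ ^ 2 + deriv F (g x) * Δ g x := by
  have hslope (v : E) : deriv (fun t : ℝ => g (x + t • v)) 0 = fderiv ℝ g x v :=
    ((hg.differentiableAt (by simp)).hasFDerivAt.hasLineDerivAt v).lineDeriv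
  have hline (v : E) : ContDiffAt ℝ 2 (fun t : ℝ => g (x + t • v)) 0 :=
    ContDiffAt.comp (0 : ℝ) (by simpa using hg) (by fun_prop)
  rw [laplacian_eq_sum_deriv_deriv (stdOrthonormalBasis ℝ E) hg,
    laplacian_eq_sum_deriv_deriv (stdOrthonormalBasis ℝ E) (f := fun y => F (g y)) (hF.comp x hg),
    (stdOrthonormalBasis ℝ E).norm_dual, Finset.mul_sum, Finset.mul_sum, ← Finset.sum_add_distrib]
  refine Finset.sum_congr rfl fun i _ => ?_
  have := deriv_deriv_comp (F := F) (by simpa using hF) (hline (stdOrthonormalBasis ℝ E i))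
  simpa [hslope] using this

theorem laplacian_inner (e x : E) : Δ (fun y => ⟪e, y⟫) x = 0 := by
  rw [laplacian_eq_sum_deriv_deriv (stdOrthonormalBasis ℝ E)
    (f := fun y => ⟪e, y⟫) (contDiff_const.inner ℝ contDiff_id).contDiffAt]
  simp [inner_add_right, inner_smul_right]

theorem laplacian_comp_inner {F : ℝ → ℝ} {e x : E} (hF : ContDiffAt ℝ 2 F ⟪e, x⟫) :
    Δ (fun y => F ⟪e, y⟫) x = deriv (deriv F) ⟪e, x⟫ * ‖e‖ ^ 2 := by
  have hgrad : fderiv ℝ (fun y => ⟪e, y⟫) x = innerSL ℝ e := (innerSL ℝ e).fderiv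
  rw [laplacian_comp hF (contDiff_const.inner ℝ contDiff_id).contDiffAt, laplacian_inner, hgrad,
    innerSL_apply_norm, mul_zero, add_zero]

omit [FiniteDimensional ℝ E] in
theorem contDiff_norm_sub_sq {n : WithTop ℕ∞} (a : E) : ContDiff ℝ n fun y => ‖y - a‖ ^ 2 :=
  (contDiff_id.sub contDiff_const).norm_sq ℝ

theorem laplacian_norm_sub_sq (a x : E) :
    Δ (fun y => ‖y - a‖ ^ 2) x = 2 * finrank ℝ E := by
  have hline (v : E) (t : ℝ) : ‖x + t • v - a‖ ^ 2 =
      ‖x - a‖ ^ 2 + (2 * ⟪x - a, v⟫ * t + ‖v‖ ^ 2 * t ^ 2) := by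
    rw [add_sub_right_comm, norm_add_sq_real, norm_smul, inner_smul_right, mul_pow,
      Real.norm_eq_abs, sq_abs]
    ring
  have hderiv (q r : ℝ) : (deriv fun t : ℝ => q * t + r * t ^ 2) = fun t => q + r * (2 * t) := by
    ext t
    have h := ((hasDerivAt_id t).const_mul q).fun_add ((hasDerivAt_pow 2 t).const_mul r)
    simpa using h.deriv
  rw [laplacian_eq_sum_deriv_deriv (stdOrthonormalBasis ℝ E) (contDiff_norm_sub_sq a).contDiffAt]
  simp only [hline, deriv_const_add', hderiv]
  simp [mul_comm]

theorem laplacian_comp_norm_sub_sq {F : ℝ → ℝ} {a x : E} (hF : ContDiffAt ℝ 2 F (‖x - a‖ ^ 2)) :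
    Δ (fun y => F (‖y - a‖ ^ 2)) x =
      4 * ‖x - a‖ ^ 2 * deriv (deriv F) (‖x - a‖ ^ 2) +
        2 * finrank ℝ E * deriv F (‖x - a‖ ^ 2) := by
  have hgrad : ‖fderiv ℝ (fun y : E => ‖y - a‖ ^ 2) x‖ = 2 * ‖x - a‖ := by
    rw [fderiv_comp_sub (f := fun y : E => ‖y‖ ^ 2) a, fderiv_norm_sq_apply,
      ← Nat.cast_smul_eq_nsmul ℝ, norm_smul, innerSL_apply_norm]
    norm_num
  rw [laplacian_comp (g := fun y => ‖y - a‖ ^ 2) hF, hgrad, laplacian_norm_sub_sq]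
  · ring
  · exact (contDiff_norm_sub_sq a).contDiffAt

/-! ### Maximum principles -/

theorem nonneg_of_laplacian_neg_of_frontier_nonneg {K : Set E} {f : E → ℝ} (hK : IsCompact K)
    (hcont : ContinuousOn f K) (hdiff : ∀ x ∈ interior K, ContDiffAt ℝ 2 f x)
    (hfrontier : ∀ x ∈ frontier K, 0 ≤ f x) (hΔ : ∀ x ∈ interior K, f x < 0 → Δ f x < 0) :
    ∀ x ∈ K, 0 ≤ f x := by
  by_contra! ⟨x, hxK, hx⟩
  obtain ⟨y, hyK, hy⟩ := hK.exists_isMinOn ⟨x, hxK⟩ hcont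
  have hfy : f y < 0 := (hy hxK).trans_lt hx
  have hyint : y ∈ interior K := by
    by_contra hyint
    exact (hfrontier y ⟨subset_closure hyK, hyint⟩).not_gt hfy
  exact (laplacian_nonneg_of_isLocalMin (hdiff y hyint)
    (hy.isLocalMin (mem_interior_iff_mem_nhds.mp hyint))).not_gt (hΔ y hyint hfy)

theorem laplacian_add_quadratic {w : E → ℝ} {y : E} (hw : ContDiffAt ℝ 2 w y) (ε δ : ℝ) (a : E) :
    Δ (fun y => w y + (ε * ‖y - a‖ ^ 2 + δ)) y = Δ w y + 2 * finrank ℝ E * ε := by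
  have hquadratic : ContDiff ℝ 2 fun y => ε * ‖y - a‖ ^ 2 + δ :=
    (contDiff_const.mul (contDiff_norm_sub_sq a)).add contDiff_const
  have hΔquadratic := laplacian_comp_norm_sub_sq (F := fun s => ε * s + δ) (a := a) (x := y)
    (by fun_prop)
  have hadd := hw.laplacian_add hquadratic.contDiffAt
  rw [hΔquadratic] at hadd
  simpa [Pi.add_def] using hadd

theorem nonneg_of_laplacian_le_mul {w : E → ℝ} {c : ℝ} (hw : ContDiff ℝ 2 w)
    (hbdd : BddBelow (range w)) (hc : 0 < c) (hΔ : ∀ x, w x < 0 → Δ w x ≤ c * w x) (x : E) :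
    0 ≤ w x := by
  obtain ⟨B, hB⟩ := hbdd
  refine le_of_forall_pos_le_add fun δ hδ => ?_
  set d : ℝ := (finrank ℝ E : ℝ)
  have : 0 ≤ d := Nat.cast_nonneg _
  set ε : ℝ := c * δ / (2 * d + 1) with hε_def
  have hε : 0 < ε := by positivity
  have hεd : 2 * d * ε < c * δ := by
    rw [hε_def, ← mul_div_assoc, div_lt_iff₀ (by positivity)]
    nlinarith [mul_pos hc hδ]
  set R : ℝ := |B| / ε + 1
  have hR : |B| ≤ ε * R ^ 2 := by
    have hBR : |B| = ε * (R - 1) := by simp only [R]; field_simp; ring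
    have hR₁ : 1 ≤ R := le_add_of_nonneg_left (by positivity)
    nlinarith [sq_nonneg (R - 1), hR₁]
  have hdiff : ContDiff ℝ 2 fun y => w y + (ε * ‖y - x‖ ^ 2 + δ) :=
    hw.add ((contDiff_const.mul (contDiff_norm_sub_sq x)).add contDiff_const)
  have hperturbed := nonneg_of_laplacian_neg_of_frontier_nonneg (isCompact_closedBall x R)
    hdiff.continuous.continuousOn (fun y _ => hdiff.contDiffAt) ?_ ?_ x
    (mem_closedBall_self (by positivity))
  · simpa using hperturbed
  · intro y hy
    have hyR : ‖y - x‖ = R := mem_sphere_iff_norm.mp (frontier_closedBall_subset_sphere hy)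
    rw [hyR]
    linarith [hB (mem_range_self y), neg_abs_le B]
  · intro y _ hy
    have hwy : w y < -δ := by nlinarith [sq_nonneg ‖y - x‖]
    rw [laplacian_add_quadratic hw.contDiffAt]
    nlinarith [hΔ y (by linarith)]

theorem neg_half_le_of_laplacian_le {w z : E → ℝ} {c B : ℝ} (hw : ContDiff ℝ 2 w) (hc : 0 < c)
    (hB : 0 ≤ B) (hwB : ∀ x, -B ≤ w x) (hzB : ∀ x, -B ≤ z x)
    (hΔ : ∀ x, w x < 0 → Δ w x ≤ c * w x + c / 2 * max (-z x) 0) (x : E) : -(B / 2) ≤ w x := by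
  suffices 0 ≤ w x + B / 2 by linarith
  refine nonneg_of_laplacian_le_mul (hw.add contDiff_const) ⟨-B, ?_⟩ hc (fun y hy => ?_) x
  · rintro _ ⟨y, rfl⟩
    linarith [hwB y]
  · rw [laplacian_add_const hw.contDiffAt]
    have hz : max (-z y) 0 ≤ B := max_le (by linarith [hzB y]) hB
    nlinarith [hΔ y (by linarith)]

theorem nonneg_and_nonneg_of_cooperative {w z : E → ℝ} {c : ℝ} (hw : ContDiff ℝ 2 w)
    (hz : ContDiff ℝ 2 z) (hwbdd : BddBelow (range w)) (hzbdd : BddBelow (range z)) (hc : 0 < c)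
    (hΔw : ∀ x, w x < 0 → Δ w x ≤ c * w x + c / 2 * max (-z x) 0)
    (hΔz : ∀ x, z x < 0 → Δ z x ≤ c * z x + c / 2 * max (-w x) 0) (x : E) :
    0 ≤ w x ∧ 0 ≤ z x := by
  obtain ⟨b, hb⟩ := hwbdd
  obtain ⟨b', hb'⟩ := hzbdd
  set B := max |b| |b'|
  have hiter (n : ℕ) : ∀ y, -(B / 2 ^ n) ≤ w y ∧ -(B / 2 ^ n) ≤ z y := by
    induction n with
    | zero =>
      intro y
      have := hb (mem_range_self y)
      have := hb' (mem_range_self y)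
      have := le_max_left |b| |b'|
      have := le_max_right |b| |b'|
      simp only [pow_zero, div_one]
      constructor <;> linarith [neg_abs_le b, neg_abs_le b']
    | succ n ih =>
      intro y
      have hBn : 0 ≤ B / 2 ^ n := by positivity
      rw [pow_succ, ← div_div]
      exact ⟨neg_half_le_of_laplacian_le hw hc hBn (fun x => (ih x).1) (fun x => (ih x).2) hΔw y,
        neg_half_le_of_laplacian_le hz hc hBn (fun x => (ih x).2) (fun x => (ih x).1) hΔz y⟩
  have hlim : Tendsto (fun n : ℕ => -(B / 2 ^ n)) atTop (𝓝 0) := by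
    have hpow : Tendsto (fun n : ℕ => (2 : ℝ)⁻¹ ^ n) atTop (𝓝 0) :=
      tendsto_pow_atTop_nhds_zero_of_lt_one (by norm_num) (by norm_num)
    simpa [div_eq_mul_inv] using (hpow.const_mul B).neg
  exact ⟨le_of_tendsto' hlim fun n => (hiter n x).1, le_of_tendsto' hlim fun n => (hiter n x).2⟩

/-! ### Propagation of positivity -/

theorem laplacian_gaussian (α : ℝ) (y x : E) :
    Δ (fun x => Real.exp (-α * ‖x - y‖ ^ 2)) x =
      (4 * α ^ 2 * ‖x - y‖ ^ 2 - 2 * finrank ℝ E * α) * Real.exp (-α * ‖x - y‖ ^ 2) := by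
  have hderiv : (deriv fun s => Real.exp (-α * s)) = fun s => -α * Real.exp (-α * s) := by
    ext s
    simpa [mul_comm] using ((hasDerivAt_id s).const_mul (-α)).exp.deriv
  rw [laplacian_comp_norm_sub_sq (F := fun s => Real.exp (-α * s)) (by fun_prop), hderiv,
    deriv_const_mul_field, hderiv]
  ring

theorem exists_mul_gaussian_lt_laplacian {r : ℝ} (C : ℝ) (hr : 0 < r) :
    ∃ α > 0, ∀ y x : E, r < ‖x - y‖ →
      C * Real.exp (-α * ‖x - y‖ ^ 2) < Δ (fun x => Real.exp (-α * ‖x - y‖ ^ 2)) x := by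
  set d : ℝ := (finrank ℝ E : ℝ)
  have : 0 ≤ d := Nat.cast_nonneg _
  set α : ℝ := (2 * d + |C|) / (4 * r ^ 2) + 1
  have hα : 1 ≤ α := le_add_of_nonneg_left (by positivity)
  have hαr : 2 * d + |C| < 4 * α * r ^ 2 := by
    have : 4 * α * r ^ 2 = 2 * d + |C| + 4 * r ^ 2 := by simp only [α]; field_simp
    nlinarith [sq_pos_of_pos hr]
  refine ⟨α, by positivity, fun y x hx => ?_⟩
  rw [laplacian_gaussian]
  refine mul_lt_mul_of_pos_right ?_ (Real.exp_pos _)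
  have hsq : r ^ 2 < ‖x - y‖ ^ 2 := by gcongr
  calc C ≤ α * |C| := (le_abs_self C).trans (le_mul_of_one_le_left (abs_nonneg C) hα)
    _ < α * (4 * α * r ^ 2 - 2 * d) := by gcongr; linarith
    _ ≤ 4 * α ^ 2 * ‖x - y‖ ^ 2 - 2 * d * α := by
        nlinarith [sq_pos_of_pos (zero_lt_one.trans_le hα)]

/-- Nonnegative `C²` functions `w` with `Δ w ≤ C w`: the class for which the strong maximum
principle holds with constants depending on `C` only. -/
structure IsNonnegSupersolution (C : ℝ) (w : E → ℝ) : Prop where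
  contDiff : ContDiff ℝ 2 w
  nonneg : ∀ x, 0 ≤ w x
  laplacian_le : ∀ x, Δ w x ≤ C * w x

namespace IsNonnegSupersolution

theorem exists_pos_mul_le {C r R : ℝ} (hC : 0 ≤ C) (hr : 0 < r) (hR : 0 ≤ R) :
    ∃ η > 0, ∀ w : E → ℝ, IsNonnegSupersolution C w → ∀ (y : E) (m : ℝ), 0 < m →
      (∀ x ∈ closedBall y r, m ≤ w x) → ∀ x ∈ closedBall y R, η * m ≤ w x := by
  obtain ⟨α, hα, hΔ⟩ := exists_mul_gaussian_lt_laplacian (E := E) C hr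
  set b : ℝ := Real.exp (-α * (R + 1) ^ 2)
  have hb : 0 < b := Real.exp_pos _
  refine ⟨Real.exp (-α * R ^ 2) - b, sub_pos.mpr (Real.exp_lt_exp.mpr (by nlinarith)),
    fun w hw y m hm hmw x hx => ?_⟩
  set g : E → ℝ := fun x => Real.exp (-α * ‖x - y‖ ^ 2)
  have hg : ContDiff ℝ 2 g := (contDiff_const.mul (contDiff_norm_sub_sq y)).exp
  have hbarrier : ContDiff ℝ 2 fun x => m * (g x - b) := contDiff_const.mul (hg.sub contDiff_const)
  have hΔbarrier (x : E) : Δ (fun x => m * (g x - b)) x = m * Δ g x := by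
    have h := laplacian_smul m (hg.sub (contDiff_const (c := b))).contDiffAt (x := x)
    simpa [Pi.smul_def, sub_eq_add_neg, laplacian_add_const hg.contDiffAt] using h
  have hcompare : 0 ≤ w x - m * (g x - b) := by
    refine nonneg_of_laplacian_neg_of_frontier_nonneg (isCompact_closedBall y (R + 1))
      (f := fun x => w x - m * (g x - b)) (hw.contDiff.sub hbarrier).continuous.continuousOn
      (fun x _ => (hw.contDiff.sub hbarrier).contDiffAt) (fun x hx => ?_) (fun x _ hx => ?_) x
      (closedBall_subset_closedBall (by linarith) hx)
    · have hgx : g x = b := by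
        simp only [g, b, mem_sphere_iff_norm.mp (frontier_closedBall_subset_sphere hx)]
      simpa [hgx] using hw.nonneg x
    · have hgx : g x ≤ 1 := Real.exp_le_one_iff.mpr (by nlinarith [sq_nonneg ‖x - y‖])
      have hrx : r < ‖x - y‖ := by
        by_contra! hxr
        nlinarith [hmw x (mem_closedBall_iff_norm.mpr hxr)]
      have hsub := hw.contDiff.contDiffAt.laplacian_sub (hbarrier.contDiffAt (x := x))
      rw [hΔbarrier] at hsub
      calc _ = Δ w x - m * Δ g x := hsub
        _ ≤ C * w x - m * Δ g x := by linarith [hw.laplacian_le x]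
        _ < C * w x - m * (C * g x) := by gcongr; exact hΔ y x hrx
        _ ≤ 0 := by nlinarith [mul_nonneg hC hm.le]
  have hgx : Real.exp (-α * R ^ 2) ≤ g x := by
    have : ‖x - y‖ ^ 2 ≤ R ^ 2 := by have := mem_closedBall_iff_norm.mp hx; gcongr
    exact Real.exp_le_exp.mpr (by nlinarith)
  nlinarith

theorem exists_pos_le_of_le_map {C m M₁ : ℝ} {w : E → ℝ} {ℓ : E →L[ℝ] ℝ} {a : E}
    (hw : IsNonnegSupersolution C w) (hC : 0 ≤ C) (ha : 0 < ℓ a) (hm : 0 < m)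
    (hfar : ∀ x, M₁ ≤ ℓ x → m ≤ w x) (M : ℝ) : ∃ κ > 0, ∀ x, M ≤ ℓ x → κ ≤ w x := by
  set t : ℝ := |M₁ + ‖ℓ‖ - M| / ℓ a
  have ht : M₁ + ‖ℓ‖ ≤ M + t * ℓ a := by
    rw [div_mul_cancel₀ _ ha.ne']
    linarith [le_abs_self (M₁ + ‖ℓ‖ - M)]
  obtain ⟨η, hη, hprop⟩ := exists_pos_mul_le (E := E) hC one_pos (norm_nonneg (t • a))
  refine ⟨η * m, mul_pos hη hm, fun x hx =>
    hprop w hw (x + t • a) m hm (fun y hy => hfar y ?_) x (by simp)⟩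
  have hdist : |ℓ y - ℓ (x + t • a)| ≤ ‖ℓ‖ := by
    rw [← map_sub]
    exact (ℓ.le_opNorm _).trans
      (mul_le_of_le_one_right (norm_nonneg ℓ) (mem_closedBall_iff_norm.mp hy))
  rw [map_add, map_smul, smul_eq_mul] at hdist
  linarith [neg_abs_le (ℓ y - (ℓ x + t * ℓ a))]

end IsNonnegSupersolution

/-! ### The bound `u ≤ 1` -/

theorem hasDerivAt_div_one_sub_mul (A : ℝ) {ε s : ℝ} (hs : 1 - ε * s ≠ 0) :
    HasDerivAt (fun s => A / (1 - ε * s)) (A * ε / (1 - ε * s) ^ 2) s := by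
  have h := (((hasDerivAt_id s).const_mul ε).const_sub 1).fun_inv (by simpa using hs)
  simpa [div_eq_mul_inv, mul_assoc] using h.const_mul A

theorem hasDerivAt_div_one_sub_mul_sq (A : ℝ) {ε s : ℝ} (hs : 1 - ε * s ≠ 0) :
    HasDerivAt (fun s => A / (1 - ε * s) ^ 2) (2 * A * ε / (1 - ε * s) ^ 3) s := by
  have h := ((((hasDerivAt_id s).const_mul ε).const_sub 1).fun_pow 2).fun_inv (by simpa using hs)
  refine (h.const_mul A).congr_deriv ?_
  simp only [id]
  field_simp
  ring

theorem laplacian_div_one_sub_le {A ε : ℝ} {a x : E} (hA : 0 ≤ A) (hε : 0 ≤ ε)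
    (hx : ε * ‖x - a‖ ^ 2 < 1) :
    Δ (fun y => (A / (1 - ε * ‖y - a‖ ^ 2) : ℝ)) x ≤
      (8 + 2 * finrank ℝ E) * ε * A / (1 - ε * ‖x - a‖ ^ 2) ^ 3 := by
  set d : ℝ := (finrank ℝ E : ℝ)
  have : 0 ≤ d := Nat.cast_nonneg _
  set s := ‖x - a‖ ^ 2
  set ρ := 1 - ε * s
  have hρ : 0 < ρ := sub_pos.mpr hx
  have hderiv : deriv (fun s => A / (1 - ε * s)) =ᶠ[𝓝 s] fun s => A * ε / (1 - ε * s) ^ 2 := by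
    filter_upwards [(by fun_prop : Continuous fun σ => 1 - ε * σ).continuousAt.eventually_ne hρ.ne']
      with σ hσ using (hasDerivAt_div_one_sub_mul A hσ).deriv
  rw [laplacian_comp_norm_sub_sq (F := fun s => A / (1 - ε * s))
      (contDiffAt_const.div (by fun_prop) hρ.ne'), hderiv.deriv_eq,
    (hasDerivAt_div_one_sub_mul_sq _ hρ.ne').deriv, (hasDerivAt_div_one_sub_mul A hρ.ne').deriv]
  have hρ_le : ρ ≤ 1 := sub_le_self 1 (by positivity)
  calc 4 * s * (2 * (A * ε) * ε / ρ ^ 3) + 2 * d * (A * ε / ρ ^ 2)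
      = (8 * (1 - ρ) + 2 * d * ρ) * (ε * A / ρ ^ 3) := by
        simp only [ρ] at hρ ⊢
        field_simp
        ring
    _ ≤ (8 + 2 * d) * (ε * A / ρ ^ 3) :=
        mul_le_mul_of_nonneg_right (by nlinarith) (by positivity)
    _ = (8 + 2 * d) * ε * A / ρ ^ 3 := by ring

theorem exists_laplacian_div_one_sub_lt {A : ℝ} (hA : 1 < A) :
    ∃ ε > 0, ∀ a x : E, ε * ‖x - a‖ ^ 2 < 1 →
      Δ (fun y => (A / (1 - ε * ‖y - a‖ ^ 2) : ℝ)) x <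
        (A / (1 - ε * ‖x - a‖ ^ 2)) ^ 3 - A / (1 - ε * ‖x - a‖ ^ 2) := by
  set d : ℝ := (finrank ℝ E : ℝ)
  have : 0 ≤ d := Nat.cast_nonneg _
  have hA' : 0 < A ^ 2 - 1 := by nlinarith
  refine ⟨(A ^ 2 - 1) / (9 + 2 * d), by positivity, fun a x hx => ?_⟩
  set ε := (A ^ 2 - 1) / (9 + 2 * d)
  have hε : 0 < ε := by positivity
  have hεd : (9 + 2 * d) * ε = A ^ 2 - 1 := mul_div_cancel₀ _ (by positivity)
  refine (laplacian_div_one_sub_le (by linarith) hε.le hx).trans_lt ?_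
  set ρ := 1 - ε * ‖x - a‖ ^ 2
  have hρ : 0 < ρ := sub_pos.mpr hx
  have hρ_le : ρ ≤ 1 := sub_le_self 1 (by positivity)
  calc (8 + 2 * d) * ε * A / ρ ^ 3 < (A ^ 2 - ρ ^ 2) * A / ρ ^ 3 := by
        gcongr
        nlinarith
    _ = (A / ρ) ^ 3 - A / ρ := by field_simp

theorem exists_barrier_large_on_sphere {A : ℝ} (hA : 1 < A) :
    ∃ R : ℝ, ∀ (a : E) (B : ℝ), ∃ r ∈ Icc 0 R, ∃ ψ : E → ℝ, ψ a = A ∧ (∀ x ∈ sphere a r, B ≤ ψ x) ∧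
      ∀ x ∈ closedBall a r, ContDiffAt ℝ 2 ψ x ∧ A ≤ ψ x ∧ Δ ψ x < ψ x ^ 3 - ψ x := by
  obtain ⟨ε, hε, hΔ⟩ := exists_laplacian_div_one_sub_lt (E := E) hA
  refine ⟨√ε⁻¹, fun a B => ?_⟩
  set τ : ℝ := (|B| + 1)⁻¹
  have hτ : 0 < τ := by positivity
  have hτ_le : τ ≤ 1 := inv_le_one_of_one_le₀ (by linarith [abs_nonneg B])
  set r : ℝ := √((1 - τ) * ε⁻¹)
  have hr : ε * r ^ 2 = 1 - τ := by
    rw [Real.sq_sqrt (mul_nonneg (by linarith) (by positivity))]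
    field_simp
  refine ⟨r, ⟨Real.sqrt_nonneg _, Real.sqrt_le_sqrt
    (mul_le_of_le_one_left (by positivity) (by linarith))⟩,
    fun y => A / (1 - ε * ‖y - a‖ ^ 2), by simp, fun x hx => ?_, fun x hx => ?_⟩
  · have hψ : A / (1 - ε * ‖x - a‖ ^ 2) = A * (|B| + 1) := by
      simp [mem_sphere_iff_norm.mp hx, hr, τ]
    refine le_of_le_of_eq ?_ hψ.symm
    nlinarith [le_abs_self B, abs_nonneg B]
  · have hxτ : ε * ‖x - a‖ ^ 2 ≤ 1 - τ := by
      have := mem_closedBall_iff_norm.mp hx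
      rw [← hr]
      gcongr
    refine ⟨contDiffAt_const.div (contDiff_const.sub (contDiff_const.mul
      (contDiff_norm_sub_sq a))).contDiffAt (by linarith), ?_, hΔ a x (by linarith)⟩
    exact le_div_self (by linarith) (by linarith) (sub_le_self 1 (by positivity))

theorem le_one_of_cube_sub_le_laplacian {u : E → ℝ} (hu : ContDiff ℝ 2 u)
    (hΔ : ∀ x, 1 < u x → u x ^ 3 - u x ≤ Δ u x) (a : E) : u a ≤ 1 := by
  by_contra! ha
  obtain ⟨A, hA, hAu⟩ := exists_between ha
  obtain ⟨R, hbarrier⟩ := exists_barrier_large_on_sphere (E := E) hA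
  obtain ⟨B, hB⟩ := ((isCompact_closedBall a R).image hu.continuous).bddAbove
  obtain ⟨r, ⟨hr, hrR⟩, ψ, hψa, hψB, hψ⟩ := hbarrier a B
  have hcompare : 0 ≤ ψ a - u a := by
    refine nonneg_of_laplacian_neg_of_frontier_nonneg (isCompact_closedBall a r)
      (f := fun x => ψ x - u x)
      (fun x hx => ((hψ x hx).1.continuousAt.sub hu.continuous.continuousAt).continuousWithinAt)
      (fun x hx => (hψ x (interior_subset hx)).1.sub hu.contDiffAt) (fun x hx => ?_)
      (fun x hx hlt => ?_) a (mem_closedBall_self hr)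
    · have hxr : x ∈ sphere a r := frontier_closedBall_subset_sphere hx
      exact sub_nonneg.mpr ((hB ⟨x, closedBall_subset_closedBall hrR
        (sphere_subset_closedBall hxr), rfl⟩).trans (hψB x hxr))
    · obtain ⟨hψ2, hψA, hΔψ⟩ := hψ x (interior_subset hx)
      have hmono : ψ x ^ 3 - ψ x ≤ u x ^ 3 - u x := by
        nlinarith [mul_nonneg (sub_nonneg.mpr (sub_neg.mp hlt).le)
          (by nlinarith : 0 ≤ u x ^ 2 + u x * ψ x + ψ x ^ 2 - 1)]
      calc _ = Δ ψ x - Δ u x := hψ2.laplacian_sub (hu.contDiffAt (x := x))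
        _ < 0 := by linarith [hΔ x (by linarith)]
  linarith

/-! ### Gradient bound by reflection -/

theorem laplacian_sub_reflection {u : E → ℝ} (hu : ContDiff ℝ 2 u) (L : E ≃ₗᵢ[ℝ] E) (x y : E) :
    Δ (fun y => u (x + y) - u (x + L y)) y = Δ u (x + y) - Δ u (x + L y) := by
  have hux : ContDiff ℝ 2 fun y => u (x + y) := hu.comp (contDiff_const.add contDiff_id)
  have huL : ContDiff ℝ 2 fun y => u (x + L y) := hux.comp L.contDiff
  calc _ = Δ (fun y => u (x + y)) y - Δ (fun y => u (x + L y)) y :=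
        hux.contDiffAt.laplacian_sub huL.contDiffAt
    _ = _ := by
        rw [laplacian_comp_linearIsometryEquiv hux, laplacian_comp_add_left,
          laplacian_comp_add_left]

theorem laplacian_norm_sq_add_inner_barrier (M D : ℝ) {e : E} (he : ‖e‖ = 1) (y : E) :
    Δ (fun y => (M * ‖y‖ ^ 2 + D * (⟪e, y⟫ - ⟪e, y⟫ ^ 2) : ℝ)) y = 2 * (finrank ℝ E * M - D) := by
  have hcoord : ContDiff ℝ 2 fun y => ⟪e, y⟫ := (innerSL ℝ e).contDiff
  have hinner : ContDiff ℝ 2 fun y => D * (⟪e, y⟫ - ⟪e, y⟫ ^ 2) :=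
    contDiff_const.mul (hcoord.sub (hcoord.pow 2))
  have hnorm : ContDiff ℝ 2 fun y : E => M * ‖y‖ ^ 2 := contDiff_const.mul (contDiff_norm_sq ℝ)
  have hderiv : (deriv fun s : ℝ => D * (s - s ^ 2)) = fun s => D * (1 - 2 * s) := by
    ext s
    simp
  have hderiv₂ (s : ℝ) : deriv (fun s : ℝ => D * (1 - 2 * s)) s = -2 * D := by
    have h := ((((hasDerivAt_id s).const_mul 2).const_sub 1).const_mul D).deriv
    simp only [id, mul_one] at h
    linarith
  have hlinear : (deriv fun s : ℝ => M * s) = fun _ => M := by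
    ext s
    simp
  have hΔnorm := laplacian_comp_norm_sub_sq (F := fun s => M * s) (a := (0 : E)) (x := y)
    (by fun_prop)
  simp only [sub_zero, hlinear, deriv_const, mul_zero, zero_add] at hΔnorm
  have hΔinner := laplacian_comp_inner (F := fun s => D * (s - s ^ 2)) (e := e) (x := y)
    (by fun_prop)
  rw [hderiv, hderiv₂, he] at hΔinner
  calc _ = Δ (fun y : E => M * ‖y‖ ^ 2) y + Δ (fun y => D * (⟪e, y⟫ - ⟪e, y⟫ ^ 2)) y :=
        hnorm.contDiffAt.laplacian_add hinner.contDiffAt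
    _ = _ := by rw [hΔnorm, hΔinner]; ring

omit [FiniteDimensional ℝ E] in
theorem frontier_halfBall_subset (e : E) :
    frontier (closedBall 0 1 ∩ {y | 0 ≤ ⟪e, y⟫}) ⊆
      {y | ‖y‖ = 1 ∧ 0 ≤ ⟪e, y⟫} ∪ {y | ‖y‖ ≤ 1 ∧ ⟪e, y⟫ = 0} := by
  have hclosed : IsClosed {y : E | 0 ≤ ⟪e, y⟫} := isClosed_le (by fun_prop) (by fun_prop)
  refine (frontier_inter_subset _ _).trans (union_subset_union (fun y hy => ?_) fun y hy => ?_)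
  · exact ⟨mem_sphere_zero_iff_norm.mp (frontier_closedBall_subset_sphere hy.1),
      hclosed.closure_subset hy.2⟩
  · exact ⟨mem_closedBall_zero_iff.mp (isClosed_closedBall.closure_subset hy.1),
      (frontier_le_subset_eq (by fun_prop) (by fun_prop) hy.2).symm⟩

theorem sub_le_of_abs_laplacian_le {u : E → ℝ} {M K D t : ℝ} {e : E} (hu : ContDiff ℝ 2 u)
    (hM : ∀ x y, u x - u y ≤ M) (hK : ∀ x, |Δ u x| ≤ K) (hD : finrank ℝ E * M + K < D)
    (he : ‖e‖ = 1) (ht : t ∈ Icc 0 1) (x : E) :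
    u (x + t • e) - u (x - t • e) ≤ M * t ^ 2 + D * (t - t ^ 2) := by
  have hM₀ : 0 ≤ M := by simpa using hM 0 0
  have hD₀ : 0 ≤ D := by nlinarith [(abs_nonneg _).trans (hK 0), (finrank ℝ E).cast_nonneg (α := ℝ)]
  set S : E ≃ₗᵢ[ℝ] E := (ℝ ∙ e)ᗮ.reflection
  have hinner (y : E) (hy : ‖y‖ ≤ 1) : ⟪e, y⟫ ≤ 1 := by
    simpa [he] using (real_inner_le_norm e y).trans (mul_le_of_le_one_right (norm_nonneg e) hy)
  have hf : ContDiff ℝ 2 fun y => u (x + y) - u (x + S y) :=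
    (hu.comp (contDiff_const.add contDiff_id)).sub (hu.comp (contDiff_const.add S.contDiff))
  have hcoord : ContDiff ℝ 2 fun y => ⟪e, y⟫ := (innerSL ℝ e).contDiff
  have hψ : ContDiff ℝ 2 fun y : E => M * ‖y‖ ^ 2 + D * (⟪e, y⟫ - ⟪e, y⟫ ^ 2) :=
    (contDiff_const.mul (contDiff_norm_sq ℝ)).add
      (contDiff_const.mul (hcoord.sub (hcoord.pow 2)))
  have hcompare := nonneg_of_laplacian_neg_of_frontier_nonneg
    ((isCompact_closedBall 0 1).inter_right (t := {y | 0 ≤ ⟪e, y⟫})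
      (isClosed_le (by fun_prop) (by fun_prop)))
    (hψ.sub hf).continuous.continuousOn (fun y _ => (hψ.sub hf).contDiffAt) ?_ ?_ (t • e) ?_
  · have hSe : S (t • e) = -(t • e) := by
      rw [map_smul, Submodule.reflection_orthogonalComplement_singleton_eq_neg, smul_neg]
    simpa [hSe, norm_smul, inner_smul_right, he, ← sub_eq_add_neg] using hcompare
  · intro y hy
    obtain ⟨hy1, hy0⟩ | ⟨-, hy0⟩ := frontier_halfBall_subset e hy
    · have := hM (x + y) (x + S y)
      rw [hy1]
      nlinarith [mul_nonneg hD₀ (mul_nonneg hy0 (sub_nonneg.mpr (hinner y hy1.le)))]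
    · have hSy : S y = y :=
        Submodule.reflection_mem_subspace_eq_self
          (Submodule.mem_orthogonal_singleton_iff_inner_right.mpr hy0)
      rw [hSy, hy0]
      nlinarith [sq_nonneg ‖y‖]
  · intro y _ _
    calc _ = Δ (fun y => M * ‖y‖ ^ 2 + D * (⟪e, y⟫ - ⟪e, y⟫ ^ 2)) y -
          Δ (fun y => u (x + y) - u (x + S y)) y := hψ.contDiffAt.laplacian_sub hf.contDiffAt
      _ < 0 := by
        rw [laplacian_norm_sq_add_inner_barrier M D he, laplacian_sub_reflection hu]
        linarith [neg_le_of_abs_le (hK (x + y)), le_of_abs_le (hK (x + S y))]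
  · simp [norm_smul, inner_smul_right, he, abs_of_nonneg ht.1, ht.1, ht.2]

theorem fderiv_le_of_abs_laplacian_le {u : E → ℝ} {M K : ℝ} {e : E} (hu : ContDiff ℝ 2 u)
    (hM : ∀ x y, u x - u y ≤ M) (hK : ∀ x, |Δ u x| ≤ K) (he : ‖e‖ = 1) (x : E) :
    2 * fderiv ℝ u x e ≤ finrank ℝ E * M + K := by
  refine le_of_forall_gt_imp_ge_of_dense fun D hD => ?_
  have hux := (hu.differentiable (by simp) x).hasFDerivAt
  have hderiv : HasDerivAt (fun t : ℝ => u (x + t • e) - u (x + t • -e)) (2 * fderiv ℝ u x e) 0 :=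
    ((hux.hasLineDerivAt e).sub (hux.hasLineDerivAt (-e))).congr_deriv (by rw [map_neg]; ring)
  have hbound : Tendsto (fun t : ℝ => M * t + D * (1 - t)) (𝓝[>] 0) (𝓝 D) :=
    tendsto_nhdsWithin_of_tendsto_nhds ((by fun_prop : Continuous _).tendsto' 0 D (by simp))
  refine le_of_tendsto_of_tendsto hderiv.tendsto_slope_zero_right hbound ?_
  filter_upwards [Ioc_mem_nhdsGT one_pos] with t ht
  have h := sub_le_of_abs_laplacian_le hu hM hK hD he (Ioc_subset_Icc_self ht) x
  simp only [zero_add, zero_smul, smul_neg, ← sub_eq_add_neg, sub_self, add_zero, sub_zero,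
    smul_eq_mul]
  rw [inv_mul_le_iff₀ ht.1]
  linarith

theorem lipschitzWith_of_abs_laplacian_le {u : E → ℝ} {M K : ℝ} (hu : ContDiff ℝ 2 u)
    (hM : ∀ x y, u x - u y ≤ M) (hK : ∀ x, |Δ u x| ≤ K) :
    LipschitzWith (finrank ℝ E * M + K).toNNReal u := by
  have hM₀ : 0 ≤ M := by simpa using hM 0 0
  have hK₀ : 0 ≤ K := (abs_nonneg _).trans (hK 0)
  have hbound : 0 ≤ finrank ℝ E * M + K := by positivity
  refine lipschitzWith_of_nnnorm_fderiv_le (hu.differentiable (by simp)) fun x => ?_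
  rw [← NNReal.coe_le_coe, coe_nnnorm, Real.coe_toNNReal _ hbound]
  refine ContinuousLinearMap.opNorm_le_of_unit_norm hbound fun e he => abs_le.mpr ?_
  have hpos := fderiv_le_of_abs_laplacian_le hu hM hK he x
  have hneg := fderiv_le_of_abs_laplacian_le hu hM hK (e := -e) (by simpa using he) x
  rw [map_neg] at hneg
  constructor <;> linarith

/-! ### Forward differences -/

theorem exists_div_le_fwdDiff {G : Type*} [AddCommMonoid G] (f : G → ℝ) (a y : G) {n : ℕ}
    (hn : 0 < n) : ∃ k < n, (f (y + n • a) - f y) / n ≤ fwdDiff a f (y + k • a) := by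
  have htelescope : ∑ k ∈ Finset.range n, fwdDiff a f (y + k • a) = f (y + n • a) - f y := by
    simpa [fwdDiff, succ_nsmul, add_assoc] using
      Finset.sum_range_sub (fun k => f (y + k • a)) n
  have hsum : ∑ _k ∈ Finset.range n, (f (y + n • a) - f y) / n ≤
      ∑ k ∈ Finset.range n, fwdDiff a f (y + k • a) := by
    rw [htelescope, Finset.sum_const, Finset.card_range, nsmul_eq_mul,
      mul_div_cancel₀ _ (Nat.cast_ne_zero.mpr hn.ne')]
  obtain ⟨k, hk, hle⟩ := Finset.exists_le_of_sum_le (Finset.nonempty_range_iff.mpr hn.ne') hsum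
  exact ⟨k, Finset.mem_range.mp hk, hle⟩

theorem eventually_mul_le_fwdDiff {G : Type*} [NormedAddCommGroup G] [NormedSpace ℝ G] {f : G → ℝ}
    {f' : G →L[ℝ] ℝ} {a y : G} {m : ℝ} (hf : HasStrictFDerivAt f f' y) (hm : m < f' a) :
    ∀ᶠ p : ℝ × G in 𝓝[>] 0 ×ˢ 𝓝 y, p.1 * m ≤ fwdDiff (p.1 • a) f p.2 := by
  set c : ℝ := (f' a - m) / (‖a‖ + 1)
  have hc : 0 < c := div_pos (sub_pos.mpr hm) (by positivity)
  have hca : c * ‖a‖ ≤ f' a - m := by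
    rw [div_mul_eq_mul_div, div_le_iff₀ (by positivity)]
    nlinarith [norm_nonneg a]
  have hcont : Continuous fun p : ℝ × G => (p.2 + p.1 • a, p.2) := by fun_prop
  have htendsto : Tendsto (fun p : ℝ × G => (p.2 + p.1 • a, p.2)) (𝓝[>] 0 ×ˢ 𝓝 y) (𝓝 (y, y)) :=
    (hcont.tendsto' (0, y) (y, y) (by simp)).mono_left
      (nhds_prod_eq (x := (0 : ℝ)) (y := y) ▸ prod_mono_left _ nhdsWithin_le_nhds)
  filter_upwards [htendsto.eventually (hf.isLittleO.def hc),
    tendsto_fst.eventually self_mem_nhdsWithin] with ⟨t, x⟩ happrox ht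
  have ht : 0 < t := ht
  simp only [add_sub_cancel_left, map_smul, smul_eq_mul, norm_smul, Real.norm_eq_abs,
    abs_of_pos ht] at happrox
  have := (abs_le.mp happrox).1
  rw [fwdDiff]
  nlinarith

/-! ### Fronts -/

theorem exists_coupling_bound {Λ : ℝ} (hΛ : 1 < Λ) :
    ∃ c > 0, ∃ ε > 0, ∀ p ∈ Icc (0 : ℝ) 1, ∀ q ∈ Icc (0 : ℝ) 1, ∀ s ∈ Icc (0 : ℝ) 1,
      ∀ t ∈ Icc (0 : ℝ) 1, (1 - ε < p ∧ 1 - ε < q ∧ s < ε ∧ t < ε) ∨ (q < ε ∧ 1 - ε < s) →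
        c ≤ p ^ 2 + p * q + q ^ 2 - 1 + Λ * s ^ 2 ∧ Λ * q * (s + t) ≤ c / 2 := by
  set c : ℝ := min 1 ((Λ - 1) / 2)
  have hc : 0 < c := lt_min one_pos (by linarith)
  have hc₁ : c ≤ 1 := min_le_left _ _
  have hc₂ : c ≤ (Λ - 1) / 2 := min_le_right _ _
  set ε : ℝ := c / (10 * Λ)
  have hε : 0 < ε := by positivity
  have hΛε : Λ * ε = c / 10 := by simp only [ε]; field_simp
  have hε₁ : ε ≤ 1 / 10 := by nlinarith
  refine ⟨c, hc, ε, hε, fun p hp q hq s hs t ht h => ?_⟩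
  have hp₀ := hp.1
  have hq₀ := hq.1
  have hs₀ := hs.1
  have hst := add_nonneg hs.1 ht.1
  have : 0 ≤ Λ := by linarith
  rcases h with ⟨hp', hq', hs', ht'⟩ | ⟨hq', hs'⟩
  · constructor
    · have : 0 ≤ Λ * s ^ 2 := by positivity
      nlinarith
    · calc Λ * q * (s + t) ≤ Λ * 1 * (ε + ε) := by gcongr; exact hq.2
        _ ≤ c / 2 := by linarith
  · constructor
    · have hs2 : Λ * (1 - 2 * ε) ≤ Λ * s ^ 2 := by gcongr; nlinarith
      have : 0 ≤ p ^ 2 + p * q + q ^ 2 := by positivity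
      linarith
    · calc Λ * q * (s + t) ≤ Λ * ε * (1 + 1) := by gcongr; exacts [hs.2, ht.2]
        _ ≤ c / 2 := by linarith

/-- A classical solution `(u, v)` of the system `(P_Λ)`, `Λ > 1`, with nonnegative components,
connecting the state `(0, 1)` to the state `(1, 0)` uniformly along the linear functional `ℓ`.
In the paper `ℓ` is the last coordinate of `ℝ^N`; a general `ℓ` makes the class invariant under
`(ℓ, u, v) ↦ (-ℓ, v, u)`. -/
structure Front (Λ : ℝ) (ℓ : E →L[ℝ] ℝ) (u v : E → ℝ) : Prop where
  one_lt : 1 < Λ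
  contDiff_fst : ContDiff ℝ 2 u
  contDiff_snd : ContDiff ℝ 2 v
  laplacian_fst (x : E) : Δ u x = u x ^ 3 - u x + Λ * u x * v x ^ 2
  laplacian_snd (x : E) : Δ v x = v x ^ 3 - v x + Λ * u x ^ 2 * v x
  nonneg_fst (x : E) : 0 ≤ u x
  nonneg_snd (x : E) : 0 ≤ v x
  tendsto_fst_atTop : Tendsto u (comap ℓ atTop) (𝓝 1)
  tendsto_snd_atTop : Tendsto v (comap ℓ atTop) (𝓝 0)
  tendsto_fst_atBot : Tendsto u (comap ℓ atBot) (𝓝 0)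
  tendsto_snd_atBot : Tendsto v (comap ℓ atBot) (𝓝 1)

namespace Front

variable {Λ : ℝ} {ℓ : E →L[ℝ] ℝ} {u v : E → ℝ} {a x : E}

theorem symm (h : Front Λ ℓ u v) : Front Λ (-ℓ) v u := by
  have hneg : ⇑(-ℓ) = Neg.neg ∘ ℓ := rfl
  have htop : comap (-ℓ) atTop = comap ℓ atBot := by rw [hneg, ← comap_comap, comap_neg_atTop]
  have hbot : comap (-ℓ) atBot = comap ℓ atTop := by rw [hneg, ← comap_comap, comap_neg_atBot]
  exact
    { one_lt := h.one_lt
      contDiff_fst := h.contDiff_snd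
      contDiff_snd := h.contDiff_fst
      laplacian_fst x := by rw [h.laplacian_snd]; ring
      laplacian_snd x := by rw [h.laplacian_fst]; ring
      nonneg_fst := h.nonneg_snd
      nonneg_snd := h.nonneg_fst
      tendsto_fst_atTop := htop ▸ h.tendsto_snd_atBot
      tendsto_snd_atTop := htop ▸ h.tendsto_fst_atBot
      tendsto_fst_atBot := hbot ▸ h.tendsto_snd_atTop
      tendsto_snd_atBot := hbot ▸ h.tendsto_fst_atTop }

theorem exists_far_above (h : Front Λ ℓ u v) {ε : ℝ} (hε : 0 < ε) :
    ∃ M, ∀ x, M ≤ ℓ x → 1 - ε < u x ∧ v x < ε := by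
  have hu := h.tendsto_fst_atTop.eventually_const_lt (sub_lt_self 1 hε)
  have hv := h.tendsto_snd_atTop.eventually_lt_const hε
  obtain ⟨M, hM⟩ := eventually_atTop.mp (eventually_comap.mp (hu.and hv))
  exact ⟨M, fun x hx => hM (ℓ x) hx x rfl⟩

theorem exists_far (h : Front Λ ℓ u v) {ε : ℝ} (hε : 0 < ε) :
    ∃ M, (∀ x, M ≤ ℓ x → 1 - ε < u x ∧ v x < ε) ∧ ∀ x, ℓ x ≤ -M → 1 - ε < v x ∧ u x < ε := by
  obtain ⟨M₁, hM₁⟩ := h.exists_far_above hε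
  obtain ⟨M₂, hM₂⟩ := h.symm.exists_far_above hε
  exact ⟨max M₁ M₂, fun x hx => hM₁ x (le_of_max_le_left hx),
    fun x hx => hM₂ x (le_neg.mpr (hx.trans (neg_le_neg (le_max_right M₁ M₂))))⟩

theorem fst_le_one (h : Front Λ ℓ u v) (x : E) : u x ≤ 1 := by
  refine le_one_of_cube_sub_le_laplacian h.contDiff_fst (fun x _ => ?_) x
  have hΛ : 0 ≤ Λ := by linarith [h.one_lt]
  have := h.nonneg_fst x
  rw [h.laplacian_fst]
  exact le_add_of_nonneg_right (by positivity)

theorem snd_le_one (h : Front Λ ℓ u v) (x : E) : v x ≤ 1 := h.symm.fst_le_one x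

theorem uniformContinuous_fst (h : Front Λ ℓ u v) : UniformContinuous u := by
  refine (lipschitzWith_of_abs_laplacian_le (M := 1) (K := 1 + Λ) h.contDiff_fst
    (fun x y => by linarith [h.fst_le_one x, h.nonneg_fst y]) fun x => ?_).uniformContinuous
  have hΛ : 0 ≤ Λ := by linarith [h.one_lt]
  have hu := h.nonneg_fst x
  have hv := h.nonneg_snd x
  have hu3 : u x ^ 3 ≤ u x := pow_le_of_le_one hu (h.fst_le_one x) three_ne_zero
  have huv : Λ * u x * v x ^ 2 ≤ Λ * 1 * 1 ^ 2 := by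
    gcongr
    exacts [h.fst_le_one x, h.snd_le_one x]
  rw [h.laplacian_fst, abs_le]
  constructor
  · have : 0 ≤ u x ^ 3 + Λ * u x * v x ^ 2 := by positivity
    linarith [h.fst_le_one x]
  · linarith

theorem uniformContinuous_snd (h : Front Λ ℓ u v) : UniformContinuous v :=
  h.symm.uniformContinuous_fst

theorem isNonnegSupersolution_fst (h : Front Λ ℓ u v) : IsNonnegSupersolution Λ u where
  contDiff := h.contDiff_fst
  nonneg := h.nonneg_fst
  laplacian_le x := by
    have hΛu : 0 ≤ Λ * u x := mul_nonneg (by linarith [h.one_lt]) (h.nonneg_fst x)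
    have hu3 : u x ^ 3 ≤ u x := pow_le_of_le_one (h.nonneg_fst x) (h.fst_le_one x) three_ne_zero
    have hv2 : v x ^ 2 ≤ 1 := pow_le_one₀ (h.nonneg_snd x) (h.snd_le_one x)
    rw [h.laplacian_fst]
    nlinarith

theorem isNonnegSupersolution_one_sub_snd (h : Front Λ ℓ u v) :
    IsNonnegSupersolution 2 fun x => 1 - v x where
  contDiff := contDiff_const.sub h.contDiff_snd
  nonneg x := sub_nonneg.mpr (h.snd_le_one x)
  laplacian_le x := by
    have hv := h.nonneg_snd x
    have hv1 := h.snd_le_one x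
    have hΔ : Δ (fun x => 1 - v x) x = -Δ v x := by
      have := (contDiffAt_const (c := (1 : ℝ))).laplacian_sub h.contDiff_snd.contDiffAt (x := x)
      simpa [Pi.sub_def] using this
    have hcoupling : 0 ≤ Λ * u x ^ 2 * v x :=
      mul_nonneg (mul_nonneg (by linarith [h.one_lt]) (sq_nonneg _)) hv
    calc Δ (fun x => 1 - v x) x = v x * (1 + v x) * (1 - v x) - Λ * u x ^ 2 * v x := by
          rw [hΔ, h.laplacian_snd]; ring
      _ ≤ v x * (1 + v x) * (1 - v x) := sub_le_self _ hcoupling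
      _ ≤ 2 * (1 - v x) :=
          mul_le_mul_of_nonneg_right (by nlinarith) (sub_nonneg.mpr hv1)

theorem exists_gap (h : Front Λ ℓ u v) (ha : 0 < ℓ a) (M : ℝ) :
    ∃ κ > 0, ∀ x, M ≤ ℓ x → κ ≤ u x ∧ v x ≤ 1 - κ := by
  obtain ⟨M₁, hfar⟩ := h.exists_far_above one_half_pos
  obtain ⟨κ₁, hκ₁, hu⟩ := h.isNonnegSupersolution_fst.exists_pos_le_of_le_map
    (by linarith [h.one_lt]) ha one_half_pos (fun x hx => by linarith [hfar x hx]) M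
  obtain ⟨κ₂, hκ₂, hv⟩ := h.isNonnegSupersolution_one_sub_snd.exists_pos_le_of_le_map
    zero_le_two ha one_half_pos (fun x hx => by linarith [hfar x hx]) M
  refine ⟨min κ₁ κ₂, lt_min hκ₁ hκ₂, fun x hx => ⟨(min_le_left _ _).trans (hu x hx), ?_⟩⟩
  linarith [min_le_right κ₁ κ₂, hv x hx]

theorem contDiff_fwdDiff (h : Front Λ ℓ u v) (a : E) : ContDiff ℝ 2 (fwdDiff a u) :=
  (h.contDiff_fst.comp (contDiff_id.add contDiff_const)).sub h.contDiff_fst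

theorem laplacian_fwdDiff (h : Front Λ ℓ u v) (a x : E) :
    Δ (fwdDiff a u) x =
      (u (x + a) ^ 2 + u (x + a) * u x + u x ^ 2 - 1 + Λ * v (x + a) ^ 2) * fwdDiff a u x +
        Λ * u x * (v (x + a) + v x) * fwdDiff a v x := by
  have hshift : ContDiff ℝ 2 fun x => u (x + a) :=
    h.contDiff_fst.comp (contDiff_id.add contDiff_const)
  calc Δ (fwdDiff a u) x = Δ (fun x => u (x + a)) x - Δ u x :=
        hshift.contDiffAt.laplacian_sub h.contDiff_fst.contDiffAt
    _ = _ := by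
        rw [laplacian_comp_add_right, h.laplacian_fst, h.laplacian_fst, fwdDiff, fwdDiff]
        ring

/-! ### Comparison with translates -/

/-- Translating by `a` moves the pair `(u, v)` towards the state `(1, 0)`. -/
def Ordered (u v : E → ℝ) (a : E) : Prop :=
  ∀ x, u x ≤ u (x + a) ∧ v (x + a) ≤ v x

omit [InnerProductSpace ℝ E] [FiniteDimensional ℝ E] in
theorem Ordered.symm (h : Ordered u v a) : Ordered v u (-a) := by
  intro x
  simpa [and_comm] using h (x + -a)

theorem exists_laplacian_fwdDiff_le (hΛ : 1 < Λ) :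
    ∃ c > 0, ∃ ε > 0, ∀ (ℓ : E →L[ℝ] ℝ) (u v : E → ℝ), Front Λ ℓ u v → ∀ a x : E,
      (1 - ε < u (x + a) ∧ 1 - ε < u x ∧ v (x + a) < ε ∧ v x < ε) ∨
        (u x < ε ∧ 1 - ε < v (x + a)) →
      fwdDiff a u x < 0 →
      Δ (fwdDiff a u) x ≤ c * fwdDiff a u x + c / 2 * max (fwdDiff a v x) 0 := by
  obtain ⟨c, hc, ε, hε, hcoef⟩ := exists_coupling_bound hΛ
  refine ⟨c, hc, ε, hε, fun ℓ u v h a x hfar hneg => ?_⟩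
  have hu (x : E) : u x ∈ Icc 0 1 := ⟨h.nonneg_fst x, h.fst_le_one x⟩
  have hv (x : E) : v x ∈ Icc 0 1 := ⟨h.nonneg_snd x, h.snd_le_one x⟩
  obtain ⟨hdiag, hcoupling⟩ := hcoef _ (hu (x + a)) _ (hu x) _ (hv (x + a)) _ (hv x) hfar
  have hcoupling₀ : 0 ≤ Λ * u x * (v (x + a) + v x) :=
    mul_nonneg (mul_nonneg (by linarith) (hu x).1) (add_nonneg (hv _).1 (hv x).1)
  rw [h.laplacian_fwdDiff]
  refine add_le_add (mul_le_mul_of_nonpos_right hdiag hneg.le) ?_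
  calc _ ≤ Λ * u x * (v (x + a) + v x) * max (fwdDiff a v x) 0 := by gcongr; exact le_max_left _ _
    _ ≤ _ := by gcongr

theorem exists_far_pair (h : Front Λ ℓ u v) {ε : ℝ} (hε : 0 < ε) :
    ∃ M, ∀ a x, 0 ≤ ℓ a → M ≤ ℓ x ∨ ℓ (x + a) ≤ -M →
      (1 - ε < u (x + a) ∧ 1 - ε < u x ∧ v (x + a) < ε ∧ v x < ε) ∨
        (1 - ε < v (x + a) ∧ 1 - ε < v x ∧ u (x + a) < ε ∧ u x < ε) := by
  obtain ⟨M, habove, hbelow⟩ := h.exists_far hε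
  refine ⟨M, fun a x ha hM => hM.imp (fun hx => ?_) fun hxa => ?_⟩
  · have hxM := habove x hx
    have hxaM := habove (x + a) (by rw [map_add]; linarith)
    exact ⟨hxaM.1, hxM.1, hxaM.2, hxM.2⟩
  · have hxM := hbelow x (by rw [map_add] at hxa; linarith)
    have hxaM := hbelow (x + a) hxa
    exact ⟨hxaM.1, hxM.1, hxaM.2, hxM.2⟩

theorem ordered_of_laplacian_fwdDiff_le (h : Front Λ ℓ u v) {c : ℝ} (hc : 0 < c)
    (hΔu : ∀ x, fwdDiff a u x < 0 →
      Δ (fwdDiff a u) x ≤ c * fwdDiff a u x + c / 2 * max (fwdDiff a v x) 0)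
    (hΔv : ∀ x, fwdDiff (-a) v x < 0 →
      Δ (fwdDiff (-a) v) x ≤ c * fwdDiff (-a) v x + c / 2 * max (fwdDiff (-a) u x) 0) :
    Ordered u v a := by
  have hcontDiff : ContDiff ℝ 2 fun x => fwdDiff (-a) v (x + a) :=
    (h.symm.contDiff_fwdDiff (-a)).comp (contDiff_id.add contDiff_const)
  have hneg (f : E → ℝ) (x : E) : fwdDiff (-a) f (x + a) = -fwdDiff a f x := by simp [fwdDiff]
  have hnonneg : ∀ x, 0 ≤ fwdDiff a u x ∧ 0 ≤ fwdDiff (-a) v (x + a) := by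
    refine nonneg_and_nonneg_of_cooperative (h.contDiff_fwdDiff a) hcontDiff ⟨-1, ?_⟩ ⟨-1, ?_⟩ hc
      (fun x hx => ?_) fun x hx => ?_
    · rintro _ ⟨y, rfl⟩
      rw [fwdDiff]
      linarith [h.nonneg_fst (y + a), h.fst_le_one y]
    · rintro _ ⟨y, rfl⟩
      beta_reduce
      rw [hneg, fwdDiff]
      linarith [h.nonneg_snd y, h.snd_le_one (y + a)]
    · rw [hneg, neg_neg]
      exact hΔu x hx
    · rw [laplacian_comp_add_right, ← hneg]
      exact hΔv (x + a) hx
  intro x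
  obtain ⟨hux, hvx⟩ := hnonneg x
  rw [hneg] at hvx
  exact ⟨sub_nonneg.mp hux, sub_nonpos.mp (neg_nonneg.mp hvx)⟩

theorem exists_comparison (h : Front Λ ℓ u v) :
    ∃ M, ∀ a, 0 ≤ ℓ a →
      (∀ x, ℓ x < M → -M < ℓ (x + a) → u x ≤ u (x + a) ∧ v (x + a) ≤ v x) → Ordered u v a := by
  obtain ⟨c, hc, ε, hε, hΔ⟩ := exists_laplacian_fwdDiff_le (E := E) h.one_lt
  obtain ⟨M, hM⟩ := h.exists_far_pair hε
  refine ⟨M, fun a ha hstrip => ?_⟩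
  have hfar (x : E) (hx : ¬(u x ≤ u (x + a) ∧ v (x + a) ≤ v x)) :
      M ≤ ℓ x ∨ ℓ (x + a) ≤ -M := by
    by_contra! hx'
    exact hx (hstrip x hx'.1 hx'.2)
  refine h.ordered_of_laplacian_fwdDiff_le hc (fun x hx => ?_) fun x hx => ?_
  · have hpair := hM a x ha (hfar x fun hx' => hx.not_ge (sub_nonneg.mpr hx'.1))
    exact hΔ ℓ u v h a x (hpair.imp_right fun ⟨hvxa, _, _, hux⟩ => ⟨hux, hvxa⟩) hx
  · obtain ⟨y, rfl⟩ : ∃ y, x = y + a := ⟨x - a, (sub_add_cancel x a).symm⟩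
    refine hΔ (-ℓ) v u h.symm (-a) (y + a) ?_ hx
    rw [fwdDiff, add_neg_cancel_right] at hx
    have hpair := hM a y ha (hfar y fun hy => hx.not_ge (sub_nonneg.mpr hy.2))
    rw [add_neg_cancel_right]
    exact hpair.symm.imp (fun ⟨hvya, hvy, huya, huy⟩ => ⟨hvy, hvya, huy, huya⟩)
      fun ⟨_, huy, hvya, _⟩ => ⟨hvya, huy⟩

theorem exists_ordered_of_large (h : Front Λ ℓ u v) (ha : 0 < ℓ a) :
    ∃ T, ∀ b, T ≤ ℓ b → Ordered u v b := by
  obtain ⟨M, hcomp⟩ := h.exists_comparison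
  obtain ⟨κ₁, hκ₁, habove⟩ := h.exists_gap ha (-M)
  obtain ⟨κ₂, hκ₂, hbelow⟩ := h.symm.exists_gap (a := -a) (by simpa using ha) (-M)
  obtain ⟨M', hfar_above, hfar_below⟩ := h.exists_far (lt_min hκ₁ hκ₂)
  have hκ_left := min_le_left κ₁ κ₂
  have hκ_right := min_le_right κ₁ κ₂
  refine ⟨2 * |M'|, fun b hb => hcomp b (by linarith [abs_nonneg M']) fun x hx hxb => ?_⟩
  obtain ⟨hux, hvx⟩ := hbelow x (neg_le_neg hx.le)
  obtain ⟨huxb, hvxb⟩ := habove (x + b) hxb.le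
  rcases le_total (ℓ x) (-|M'|) with hfar | hfar
  · have := hfar_below x (hfar.trans (neg_le_neg (le_abs_self M')))
    constructor <;> linarith
  · have := hfar_above (x + b) (by rw [map_add]; linarith [le_abs_self M'])
    constructor <;> linarith

theorem isNonnegSupersolution_fwdDiff (h : Front Λ ℓ u v) (hord : Ordered u v a) :
    IsNonnegSupersolution (2 + Λ) (fwdDiff a u) where
  contDiff := h.contDiff_fwdDiff a
  nonneg x := sub_nonneg.mpr (hord x).1
  laplacian_le x := by
    have hΛ : 0 ≤ Λ := by linarith [h.one_lt]
    have hux := h.nonneg_fst x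
    have huxa := h.nonneg_fst (x + a)
    have hvx := h.nonneg_snd x
    have hvxa := h.nonneg_snd (x + a)
    have hdiag : u (x + a) ^ 2 + u (x + a) * u x + u x ^ 2 - 1 + Λ * v (x + a) ^ 2 ≤
        1 ^ 2 + 1 * 1 + 1 ^ 2 - 1 + Λ * 1 ^ 2 := by
      gcongr <;> first | exact h.fst_le_one _ | exact h.snd_le_one _
    have hcoupling : Λ * u x * (v (x + a) + v x) * fwdDiff a v x ≤ 0 :=
      mul_nonpos_of_nonneg_of_nonpos (by positivity) (sub_nonpos.mpr (hord x).2)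
    have hnonneg : 0 ≤ fwdDiff a u x := sub_nonneg.mpr (hord x).1
    rw [h.laplacian_fwdDiff]
    linarith [mul_le_mul_of_nonneg_right hdiag hnonneg]

theorem exists_pos_forall_exists_le_fwdDiff (h : Front Λ ℓ u v) (ha : 0 < ℓ a) (K : ℝ) :
    ∃ R ≥ 0, ∃ d > 0, ∀ x, |ℓ x| ≤ K → ∃ y, x ∈ closedBall y R ∧ d ≤ fwdDiff a u y := by
  obtain ⟨M, habove, hbelow⟩ := h.exists_far (ε := 1 / 4) (by norm_num)
  obtain ⟨n, hn⟩ := exists_nat_gt ((|K| + |M|) / ℓ a)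
  have hn₀ : (0 : ℝ) < n := lt_of_le_of_lt (by positivity) hn
  rw [div_lt_iff₀ ha] at hn
  refine ⟨n * ‖a‖, by positivity, 1 / (4 * n), by positivity, fun x hx => ?_⟩
  obtain ⟨hxl, hxr⟩ := abs_le.mp hx
  have hstart := hbelow (x - n • a) (by
    simp only [map_sub, map_nsmul, nsmul_eq_mul]
    linarith [le_abs_self K, le_abs_self M])
  have hend := habove (x - n • a + (2 * n) • a) (by
    simp only [map_add, map_sub, map_nsmul, nsmul_eq_mul, Nat.cast_mul, Nat.cast_ofNat]
    linarith [le_abs_self K, le_abs_self M])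
  obtain ⟨k, hk, hle⟩ := exists_div_le_fwdDiff u a (x - n • a) (n := 2 * n)
    (by have := Nat.cast_pos.mp hn₀; omega)
  refine ⟨x - n • a + k • a, ?_, le_trans ?_ hle⟩
  · have hkn : |(n : ℝ) - k| ≤ n := by
      have : (k : ℝ) < 2 * n := by exact_mod_cast hk
      rw [abs_le]
      constructor <;> linarith [k.cast_nonneg (α := ℝ)]
    have hsub : x - (x - n • a + k • a) = ((n : ℝ) - k) • a := by
      rw [sub_smul, Nat.cast_smul_eq_nsmul, Nat.cast_smul_eq_nsmul]
      abel
    rw [mem_closedBall, dist_eq_norm, hsub, norm_smul, Real.norm_eq_abs]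
    gcongr
  · rw [Nat.cast_mul, Nat.cast_ofNat, div_le_div_iff₀ (by positivity) (by positivity)]
    nlinarith

theorem exists_pos_le_fwdDiff_fst (h : Front Λ ℓ u v) (ha : 0 < ℓ a) (hord : Ordered u v a)
    (K : ℝ) : ∃ c > 0, ∀ x, |ℓ x| ≤ K → c ≤ fwdDiff a u x := by
  obtain ⟨R, hR, d, hd, hnear⟩ := h.exists_pos_forall_exists_le_fwdDiff ha K
  have huc : UniformContinuous (fwdDiff a u) :=
    (h.uniformContinuous_fst.comp (uniformContinuous_id.add uniformContinuous_const)).sub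
      h.uniformContinuous_fst
  obtain ⟨r, hr, hball⟩ := Metric.uniformContinuous_iff.mp huc (d / 2) (half_pos hd)
  obtain ⟨η, hη, hprop⟩ := IsNonnegSupersolution.exists_pos_mul_le (E := E) (C := 2 + Λ)
    (by linarith [h.one_lt]) (half_pos hr) hR
  refine ⟨η * (d / 2), by positivity, fun x hx => ?_⟩
  obtain ⟨y, hxy, hdy⟩ := hnear x hx
  refine hprop _ (h.isNonnegSupersolution_fwdDiff hord) y _ (half_pos hd) (fun z hz => ?_) x hxy
  have hzy := hball ((mem_closedBall.mp hz).trans_lt (half_lt_self hr))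
  rw [Real.dist_eq, abs_lt] at hzy
  linarith

theorem exists_pos_le_fwdDiff (h : Front Λ ℓ u v) (ha : 0 < ℓ a) (hord : Ordered u v a) (K : ℝ) :
    ∃ c > 0, ∀ x, |ℓ x| ≤ K → c ≤ u (x + a) - u x ∧ c ≤ v x - v (x + a) := by
  obtain ⟨c₁, hc₁, hu⟩ := h.exists_pos_le_fwdDiff_fst ha hord K
  obtain ⟨c₂, hc₂, hv⟩ := h.symm.exists_pos_le_fwdDiff_fst (a := -a) (by simpa using ha) hord.symm
    (K + ℓ a)
  refine ⟨min c₁ c₂, lt_min hc₁ hc₂, fun x hx => ⟨(min_le_left _ _).trans (hu x hx), ?_⟩⟩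
  have hxa : |(-ℓ) (x + a)| ≤ K + ℓ a := by
    rw [neg_apply, abs_neg, map_add]
    exact (abs_add_le _ _).trans (add_le_add hx (abs_of_pos ha).le)
  simpa [fwdDiff] using (min_le_right _ _).trans (hv (x + a) hxa)

/-! ### Sliding -/

omit [InnerProductSpace ℝ E] [FiniteDimensional ℝ E] in
theorem isClosed_setOf_ordered (hu : Continuous u) (hv : Continuous v) :
    IsClosed {a | Ordered u v a} := by
  simp only [Ordered, ofPred_forall, ofPred_and]
  exact isClosed_iInter fun x =>
    (isClosed_le continuous_const (by fun_prop)).inter (isClosed_le (by fun_prop) continuous_const)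

theorem eventually_ordered (h : Front Λ ℓ u v) (ha : 0 < ℓ a) (hord : Ordered u v a) :
    ∀ᶠ b in 𝓝 a, Ordered u v b := by
  obtain ⟨M, hcomp⟩ := h.exists_comparison
  obtain ⟨c, hc, hstrict⟩ := h.exists_pos_le_fwdDiff ha hord (|M| + (ℓ a + 1))
  obtain ⟨r₁, hr₁, hu⟩ := Metric.uniformContinuous_iff.mp h.uniformContinuous_fst c hc
  obtain ⟨r₂, hr₂, hv⟩ := Metric.uniformContinuous_iff.mp h.uniformContinuous_snd c hc
  filter_upwards [ball_mem_nhds a hr₁, ball_mem_nhds a hr₂,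
    ℓ.continuous.continuousAt.eventually_const_lt ha,
    ℓ.continuous.continuousAt.eventually_lt_const (lt_add_one (ℓ a))] with b hb₁ hb₂ hb₀ hb
  refine hcomp b hb₀.le fun x hx hxb => ?_
  have hstrip : |ℓ x| ≤ |M| + (ℓ a + 1) := by
    rw [map_add] at hxb
    rw [abs_le]
    constructor <;> linarith [le_abs_self M]
  obtain ⟨hux, hvx⟩ := hstrict x hstrip
  have hub := hu (a := x + b) (b := x + a) (by simpa using hb₁)
  have hvb := hv (a := x + b) (b := x + a) (by simpa using hb₂)
  rw [Real.dist_eq, abs_lt] at hub hvb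
  constructor <;> linarith

theorem ordered_of_pos (h : Front Λ ℓ u v) (ha : 0 < ℓ a) : Ordered u v a := by
  set U : Set E := {b | 0 < ℓ b} with hU
  have hUconn : IsPreconnected U := (convex_halfSpace_gt ℓ.toLinearMap.isLinear 0).isPreconnected
  have hopen : IsOpen (U ∩ {b | Ordered u v b}) := by
    refine isOpen_iff_mem_nhds.mpr fun b ⟨hb, hord⟩ => inter_mem ?_ (h.eventually_ordered hb hord)
    exact ℓ.continuous.continuousAt.eventually_const_lt hb
  have hnonempty : (U ∩ (U ∩ {b | Ordered u v b})).Nonempty := by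
    obtain ⟨T, hT⟩ := h.exists_ordered_of_large ha
    have hlarge : ℓ (((|T| + 1) / ℓ a) • a) = |T| + 1 := by
      rw [map_smul, smul_eq_mul, div_mul_cancel₀ _ ha.ne']
    have hmem : ((|T| + 1) / ℓ a) • a ∈ U := by
      rw [hU, mem_ofPred_eq, hlarge]; positivity
    exact ⟨_, hmem, hmem, hT _ (by rw [hlarge]; linarith [le_abs_self T])⟩
  have hclosed : closure (U ∩ {b | Ordered u v b}) ∩ U ⊆ U ∩ {b | Ordered u v b} :=
    fun b ⟨hb, hbU⟩ => ⟨hbU, (isClosed_setOf_ordered h.contDiff_fst.continuous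
      h.contDiff_snd.continuous).closure_subset_iff.mpr inter_subset_right hb⟩
  exact (hUconn.subset_of_closure_inter_subset hopen hnonempty hclosed ha).2

/-! ### Strict monotonicity -/

theorem exists_fderiv_fst_pos (h : Front Λ ℓ u v) (ha : 0 < ℓ a) : ∃ y, 0 < fderiv ℝ u y a := by
  by_contra! hnonpos
  obtain ⟨R, -, d, hd, hnear⟩ := h.exists_pos_forall_exists_le_fwdDiff ha 0
  obtain ⟨y, -, hy⟩ := hnear 0 (by simp)
  have hderiv (t : ℝ) : HasDerivAt (fun t : ℝ => u (y + t • a)) (fderiv ℝ u (y + t • a) a) t := by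
    have hline : HasDerivAt (fun t : ℝ => y + t • a) a t := by
      simpa using ((hasDerivAt_id t).smul_const a).const_add y
    exact ((h.contDiff_fst.differentiable two_ne_zero) _).hasFDerivAt.comp_hasDerivAt t hline
  have hanti : Antitone fun t : ℝ => u (y + t • a) :=
    antitone_of_hasDerivAt_nonpos hderiv fun t => hnonpos _
  have := hanti zero_le_one
  simp only [one_smul, zero_smul, add_zero] at this
  rw [fwdDiff] at hy
  linarith

theorem fderiv_fst_pos (h : Front Λ ℓ u v) (ha : 0 < ℓ a) (x : E) : 0 < fderiv ℝ u x a := by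
  have hdiff : Differentiable ℝ u := h.contDiff_fst.differentiable two_ne_zero
  obtain ⟨y, hy⟩ := h.exists_fderiv_fst_pos ha
  have hstrict : HasStrictFDerivAt u (fderiv ℝ u y) y :=
    h.contDiff_fst.contDiffAt.hasStrictFDerivAt two_ne_zero
  obtain ⟨small, hsmall, near, hnear, hlower⟩ :=
    eventually_prod_iff.mp (eventually_mul_le_fwdDiff hstrict (half_lt_self hy))
  obtain ⟨r, hr, hball⟩ := nhds_basis_closedBall.eventually_iff.mp hnear
  obtain ⟨η, hη, hprop⟩ := IsNonnegSupersolution.exists_pos_mul_le (E := E) (C := 2 + Λ)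
    (by linarith [h.one_lt]) hr (dist_nonneg (x := x) (y := y))
  have hslope : Tendsto (fun t : ℝ => t⁻¹ • (u (x + t • a) - u x)) (𝓝[>] 0)
      (𝓝 (fderiv ℝ u x a)) :=
    ((hdiff x).hasFDerivAt.hasLineDerivAt a).tendsto_slope_zero_right
  refine (mul_pos hη (half_pos hy)).trans_le (ge_of_tendsto hslope ?_)
  filter_upwards [hsmall, self_mem_nhdsWithin] with t ht ht₀
  have ht₀ : 0 < t := ht₀
  have hsuper : IsNonnegSupersolution (2 + Λ) (fwdDiff (t • a) u) :=
    h.isNonnegSupersolution_fwdDiff (h.ordered_of_pos (by simpa using mul_pos ht₀ ha))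
  have hx := hprop _ hsuper y (t * (fderiv ℝ u y a / 2)) (by positivity)
    (fun z hz => hlower ht (hball hz)) x (mem_closedBall.mpr le_rfl)
  rw [smul_eq_mul, inv_mul_eq_div, le_div_iff₀ ht₀]
  calc _ = η * (t * (fderiv ℝ u y a / 2)) := by ring
    _ ≤ _ := hx

theorem fderiv_snd_neg (h : Front Λ ℓ u v) (ha : 0 < ℓ a) (x : E) : fderiv ℝ v x a < 0 := by
  simpa using h.symm.fderiv_fst_pos (a := -a) (by simpa using ha) x

end Front

theorem stmt_17_general {Λ : ℝ} {ℓ : E →L[ℝ] ℝ} {u v : E → ℝ} (h : Front Λ ℓ u v) {a : E}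
    (ha : 0 < ℓ a) (x : E) : 0 < fderiv ℝ u x a ∧ fderiv ℝ v x a < 0 :=
  ⟨h.fderiv_fst_pos ha x, h.fderiv_snd_neg ha x⟩

theorem lap_eq_laplacian {N : ℕ} {f : EuclideanSpace ℝ (Fin N) → ℝ} (hf : ContDiff ℝ 2 f)
    (x : EuclideanSpace ℝ (Fin N)) : lap N f x = Δ f x := by
  rw [laplacian_eq_iteratedFDeriv_orthonormalBasis f (EuclideanSpace.basisFun (Fin N) ℝ)]
  refine Finset.sum_congr rfl fun i _ => ?_
  have hfderiv : DifferentiableAt ℝ (fderiv ℝ f) x :=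
    (hf.fderiv_right (m := 1) (by norm_num)).differentiable one_ne_zero x
  rw [iteratedFDeriv_two_apply, fderiv_clm_apply hfderiv (by fun_prop)]
  simp

theorem IsSolution.front {N : ℕ} {Λ : ℝ} {u v : EuclideanSpace ℝ (Fin (N + 1)) → ℝ}
    (h : IsSolution (N + 1) Λ u v) (hinf : Hinf N u v) (hΛ : 1 < Λ) (hu : ∀ x, 0 ≤ u x)
    (hv : ∀ x, 0 ≤ v x) :
    Front Λ (EuclideanSpace.proj (Fin.last N) : EuclideanSpace ℝ (Fin (N + 1)) →L[ℝ] ℝ) u v := by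
  obtain ⟨hu2, hv2, hΔu, hΔv⟩ := h
  obtain ⟨htop, hbot⟩ := hinf
  have htop (ε : ℝ) (hε : 0 < ε) : ∀ᶠ x in comap (EuclideanSpace.proj (𝕜 := ℝ) (Fin.last N)) atTop,
      |u x - 1| < ε ∧ |v x| < ε :=
    let ⟨M, hM⟩ := htop ε hε
    ((eventually_ge_atTop M).comap _).mono hM
  have hbot (ε : ℝ) (hε : 0 < ε) : ∀ᶠ x in comap (EuclideanSpace.proj (𝕜 := ℝ) (Fin.last N)) atBot,
      |u x| < ε ∧ |v x - 1| < ε :=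
    let ⟨M, hM⟩ := hbot ε hε
    ((eventually_le_atBot M).comap _).mono hM
  exact
    { one_lt := hΛ
      contDiff_fst := hu2
      contDiff_snd := hv2
      laplacian_fst x := by rw [← lap_eq_laplacian hu2]; linarith [hΔu x]
      laplacian_snd x := by rw [← lap_eq_laplacian hv2]; linarith [hΔv x]
      nonneg_fst := hu
      nonneg_snd := hv
      tendsto_fst_atTop := Metric.tendsto_nhds.mpr fun ε hε =>
        (htop ε hε).mono fun x hx => hx.1
      tendsto_snd_atTop := Metric.tendsto_nhds.mpr fun ε hε =>
        (htop ε hε).mono fun x hx => by simpa using hx.2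
      tendsto_fst_atBot := Metric.tendsto_nhds.mpr fun ε hε =>
        (hbot ε hε).mono fun x hx => by simpa using hx.1
      tendsto_snd_atBot := Metric.tendsto_nhds.mpr fun ε hε =>
        (hbot ε hε).mono fun x hx => hx.2 }

theorem pos_of_norm_sub_single_lt_one {ι : Type*} [Fintype ι] [DecidableEq ι]
    {ν : EuclideanSpace ℝ ι} {i : ι} (hν : ‖ν - EuclideanSpace.single i 1‖ < 1) : 0 < ν i := by
  have hcoord : |ν i - 1| < 1 := by
    simpa using (PiLp.norm_apply_le (ν - EuclideanSpace.single i 1) i).trans_lt hν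
  linarith [(abs_lt.mp hcoord).1]

/-- Lemma 4.3: `u` is strictly increasing and `v` strictly
decreasing with respect to all unit vectors in an open neighborhood of `e_N`
in the unit sphere. -/
theorem stmt_17 (N : ℕ) (Λ : ℝ) (hΛ : 1 < Λ)
    (u v : EuclideanSpace ℝ (Fin (N + 1)) → ℝ)
    (hsol : IsSolution (N + 1) Λ u v)
    (hu : ∀ x, 0 ≤ u x) (hv : ∀ x, 0 ≤ v x)
    (hinf : Hinf N u v) :
    ∃ δ : ℝ, 0 < δ ∧
      ∀ ν : EuclideanSpace ℝ (Fin (N + 1)), ‖ν‖ = 1 →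
        ‖ν - EuclideanSpace.single (Fin.last N) 1‖ < δ →
        ∀ x, 0 < fderiv ℝ u x ν ∧ fderiv ℝ v x ν < 0 :=
  ⟨1, one_pos, fun _ _ hν => stmt_17_general (hsol.front hinf hΛ hu hv)
    (pos_of_norm_sub_single_lt_one hν)⟩
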